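/- arXiv:1506.03628 — 3 statements merged into one kernel-verified Lean document; each statement's English description precedes it below -/
import Mathlib

section
/- Let N ≥ 2 be an integer, ω > 0, and 1 < p < p_max, and let U : [0,∞) → (0,∞) be the radial profile of a ground-state profile u of (QLS). Suppose v : [0,∞) → ℝ is continuous, twice continuously differentiable on (0,∞), satisfies ∫₀^∞ (v(r)² + v'(r)²) r^{N−1} dr < ∞, and solves L₋,₀ v = 0 on (0,∞), i.e. −v'' − ((N−1)/r)v' + ωv − ((Δ_r(U²))(r) + U(r)^{p−1})v = 0. Then there exists a real number c such that v(r) = c·U(r) for all r ≥ 0. -/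
open MeasureTheory Real Filter Topology

noncomputable section

/-- Partial derivative along the `i`-th coordinate direction. -/
def pd {N : ℕ} {F : Type*} [NormedAddCommGroup F] [NormedSpace ℝ F]
    (i : Fin N) (f : EuclideanSpace ℝ (Fin N) → F) (x : EuclideanSpace ℝ (Fin N)) : F :=
  fderiv ℝ f x (EuclideanSpace.single i 1)

/-- Euclidean Laplacian. -/
def lap {N : ℕ} {F : Type*} [NormedAddCommGroup F] [NormedSpace ℝ F]
    (f : EuclideanSpace ℝ (Fin N) → F) (x : EuclideanSpace ℝ (Fin N)) : F :=
  ∑ i : Fin N, pd i (pd i f) x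

/-- Squared norm of the gradient of a real-valued function: `|∇f|²`. -/
def gradsq {N : ℕ} (f : EuclideanSpace ℝ (Fin N) → ℝ) (x : EuclideanSpace ℝ (Fin N)) : ℝ :=
  ∑ i : Fin N, (pd i f x) ^ 2

/-- A ground-state profile of the quasilinear Schrödinger equation (QLS)
`-Δu - uΔ(u²) + ωu - u^p = 0` on `ℝ^N`: smooth, positive, radially symmetric with a
strictly decreasing positive profile, solves (QLS) pointwise, and decays
exponentially together with all its derivatives. -/
structure IsGroundState (N : ℕ) (ω p : ℝ) (u : EuclideanSpace ℝ (Fin N) → ℝ) : Prop where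
  smooth : ContDiff ℝ (⊤ : ℕ∞) u
  pos : ∀ x, 0 < u x
  radial : ∃ U : ℝ → ℝ, StrictAntiOn U (Set.Ici 0) ∧ (∀ r, 0 ≤ r → 0 < U r) ∧
      ∀ x, u x = U ‖x‖
  solves : ∀ x, -lap u x - u x * lap (fun y => (u y) ^ 2) x + ω * u x - (u x) ^ p = 0
  decay : ∀ k : ℕ, ∃ C > 0, ∃ δ > 0, ∀ x,
      ‖iteratedFDeriv ℝ k u x‖ ≤ C * Real.exp (-δ * ‖x‖)

/-- The linearized operator `L₊` around `u` (real-valued functions). -/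
def Lplus {N : ℕ} (ω p : ℝ) (u η : EuclideanSpace ℝ (Fin N) → ℝ)
    (x : EuclideanSpace ℝ (Fin N)) : ℝ :=
  -lap η x - 2 * u x * lap (fun y => u y * η y) x + ω * η x
    - (lap (fun y => (u y) ^ 2) x + p * u x ^ (p - 1)) * η x

/-- The linearized operator `L₋` around `u`. -/
def Lminus {N : ℕ} (ω p : ℝ) (u ζ : EuclideanSpace ℝ (Fin N) → ℝ)
    (x : EuclideanSpace ℝ (Fin N)) : ℝ :=
  -lap ζ x + ω * ζ x - (lap (fun y => (u y) ^ 2) x + u x ^ (p - 1)) * ζ x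

/-- Radial Laplacian `Δ_r f (r) = f''(r) + ((N-1)/r) f'(r)`. -/
def lapRad (N : ℕ) (f : ℝ → ℝ) (r : ℝ) : ℝ :=
  deriv (deriv f) r + ((N : ℝ) - 1) / r * deriv f r

/-- The radial linearized operator `L₊,ₖ` with angular eigenvalue `λ_k = k(N+k-2)`. -/
def LplusRad (N : ℕ) (ω p : ℝ) (U : ℝ → ℝ) (k : ℕ) (v : ℝ → ℝ) (r : ℝ) : ℝ :=
  -(1 + 2 * U r ^ 2) *
      (deriv (deriv v) r + ((N : ℝ) - 1) / r * deriv v r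
        - (k : ℝ) * ((N : ℝ) + (k : ℝ) - 2) / r ^ 2 * v r)
    - 4 * U r * deriv U r * deriv v r + ω * v r
    - (2 * U r * lapRad N U r + lapRad N (fun s => U s ^ 2) r + p * U r ^ (p - 1)) * v r

/-- The radial linearized operator `L₋,ₖ` with angular eigenvalue `λ_k = k(N+k-2)`. -/
def LminusRad (N : ℕ) (ω p : ℝ) (U : ℝ → ℝ) (k : ℕ) (v : ℝ → ℝ) (r : ℝ) : ℝ :=
  -deriv (deriv v) r - ((N : ℝ) - 1) / r * deriv v r
    + (k : ℝ) * ((N : ℝ) + (k : ℝ) - 2) / r ^ 2 * v r + ω * v r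
    - (lapRad N (fun s => U s ^ 2) r + U r ^ (p - 1)) * v r

/-!
The profile `U` itself solves the linear equation `L₋,₀ U = 0`, because this is (QLS) written in the
radial variable. For two solutions the Wronskian `r^{N-1}(v'U - vU')` is constant, and it is bounded
by the sum of the energy densities of `v` and `U`, hence integrable on the half-line. A constant
which is integrable on a half-line vanishes, so `(v/U)' = 0`.
-/

section SturmLiouville

variable {a r : ℝ} {ρ b q f g : ℝ → ℝ}

lemma differentiableAt_deriv_of_contDiffAt_two (hf : ContDiffAt ℝ 2 f r) :
    DifferentiableAt ℝ (deriv f) r :=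
  ((hf.fderiv_right (m := 1) (by norm_num)).differentiableAt one_ne_zero).clm_apply
    (differentiableAt_const 1)

/-- The Wronskian of `f` and `g` with weight `ρ`; it is constant when `f` and `g` solve the same
equation `y'' + b y' = q y` and `ρ' = b ρ`. -/
def weightedWronskian (ρ f g : ℝ → ℝ) (r : ℝ) : ℝ :=
  ρ r * (deriv f r * g r - f r * deriv g r)

lemma hasDerivAt_weightedWronskian (hρ : HasDerivAt ρ (b r * ρ r) r)
    (hf : ContDiffAt ℝ 2 f r) (hg : ContDiffAt ℝ 2 g r)
    (hfeq : deriv (deriv f) r + b r * deriv f r = q r * f r)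
    (hgeq : deriv (deriv g) r + b r * deriv g r = q r * g r) :
    HasDerivAt (weightedWronskian ρ f g) 0 r := by
  have hf' := (hf.differentiableAt two_ne_zero).hasDerivAt
  have hg' := (hg.differentiableAt two_ne_zero).hasDerivAt
  have hf'' := (differentiableAt_deriv_of_contDiffAt_two hf).hasDerivAt
  have hg'' := (differentiableAt_deriv_of_contDiffAt_two hg).hasDerivAt
  refine (hρ.mul ((hf''.mul hg').sub (hf'.mul hg''))).congr_deriv ?_
  simp only [Pi.mul_apply, Pi.sub_apply]
  linear_combination ρ r * g r * hfeq - ρ r * f r * hgeq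

lemma abs_weightedWronskian_le (hρ : 0 ≤ ρ r) :
    |weightedWronskian ρ f g r| ≤
      (f r ^ 2 + deriv f r ^ 2) * ρ r + (g r ^ 2 + deriv g r ^ 2) * ρ r := by
  have hW : |deriv f r * g r - f r * deriv g r| ≤
      (f r ^ 2 + deriv f r ^ 2) + (g r ^ 2 + deriv g r ^ 2) := by
    rw [abs_le]
    constructor <;> nlinarith [sq_nonneg (deriv f r + g r), sq_nonneg (deriv f r - g r),
      sq_nonneg (f r + deriv g r), sq_nonneg (f r - deriv g r)]
  rw [weightedWronskian, abs_mul, abs_of_nonneg hρ, ← add_mul, mul_comm]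
  exact mul_le_mul_of_nonneg_right hW hρ

lemma eq_zero_of_integrableOn_Ioi_const {c : ℝ}
    (hc : IntegrableOn (fun _ : ℝ => c) (Set.Ioi a)) : c = 0 := by
  simpa [integrableOn_const_iff] using hc

lemma weightedWronskian_eq_zero (hρnonneg : ∀ r ∈ Set.Ioi a, 0 ≤ ρ r)
    (hρ : ∀ r ∈ Set.Ioi a, HasDerivAt ρ (b r * ρ r) r)
    (hf : ContDiffOn ℝ 2 f (Set.Ioi a)) (hg : ContDiffOn ℝ 2 g (Set.Ioi a))
    (hfeq : ∀ r ∈ Set.Ioi a, deriv (deriv f) r + b r * deriv f r = q r * f r)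
    (hgeq : ∀ r ∈ Set.Ioi a, deriv (deriv g) r + b r * deriv g r = q r * g r)
    (hfint : IntegrableOn (fun r => (f r ^ 2 + deriv f r ^ 2) * ρ r) (Set.Ioi a))
    (hgint : IntegrableOn (fun r => (g r ^ 2 + deriv g r ^ 2) * ρ r) (Set.Ioi a)) :
    ∀ r ∈ Set.Ioi a, weightedWronskian ρ f g r = 0 := by
  have hderiv : ∀ r ∈ Set.Ioi a, HasDerivAt (weightedWronskian ρ f g) 0 r := fun r hr =>
    hasDerivAt_weightedWronskian (hρ r hr) (hf.contDiffAt (Ioi_mem_nhds hr))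
      (hg.contDiffAt (Ioi_mem_nhds hr)) (hfeq r hr) (hgeq r hr)
  obtain ⟨c, hconst⟩ := isOpen_Ioi.exists_is_const_of_deriv_eq_zero isPreconnected_Ioi
    (fun r hr => (hderiv r hr).differentiableAt.differentiableWithinAt)
    (fun r hr => (hderiv r hr).deriv)
  have hcint : IntegrableOn (fun _ : ℝ => c) (Set.Ioi a) := by
    refine (hfint.add hgint).mono' aestronglyMeasurable_const ?_
    filter_upwards [ae_restrict_mem measurableSet_Ioi] with r hr
    rw [← hconst r hr]
    exact abs_weightedWronskian_le (hρnonneg r hr)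
  intro r hr
  rw [hconst r hr, eq_zero_of_integrableOn_Ioi_const hcint]

lemma exists_eqOn_const_mul_of_weightedWronskian_eq_zero (hρ : ∀ r ∈ Set.Ioi a, ρ r ≠ 0)
    (hf : DifferentiableOn ℝ f (Set.Ioi a)) (hg : DifferentiableOn ℝ g (Set.Ioi a))
    (hg0 : ∀ r ∈ Set.Ioi a, g r ≠ 0)
    (hW : ∀ r ∈ Set.Ioi a, weightedWronskian ρ f g r = 0) :
    ∃ c : ℝ, Set.EqOn f (fun r => c * g r) (Set.Ioi a) := by
  have hquot : ∀ r ∈ Set.Ioi a, HasDerivAt (fun s => f s / g s) 0 r := by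
    intro r hr
    have hf' := (hf.differentiableAt (Ioi_mem_nhds hr)).hasDerivAt
    have hg' := (hg.differentiableAt (Ioi_mem_nhds hr)).hasDerivAt
    have hnum : deriv f r * g r - f r * deriv g r = 0 :=
      (mul_eq_zero.mp (hW r hr)).resolve_left (hρ r hr)
    exact (hf'.div hg' (hg0 r hr)).congr_deriv (by rw [hnum, zero_div])
  obtain ⟨c, hc⟩ := isOpen_Ioi.exists_is_const_of_deriv_eq_zero isPreconnected_Ioi
    (fun r hr => (hquot r hr).differentiableAt.differentiableWithinAt)
    (fun r hr => (hquot r hr).deriv)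
  exact ⟨c, fun r hr => (div_eq_iff (hg0 r hr)).mp (hc r hr)⟩

theorem exists_eqOn_const_mul_of_integrableOn_energy (hρpos : ∀ r ∈ Set.Ioi a, 0 < ρ r)
    (hρ : ∀ r ∈ Set.Ioi a, HasDerivAt ρ (b r * ρ r) r)
    (hfc : ContinuousOn f (Set.Ici a)) (hgc : ContinuousOn g (Set.Ici a))
    (hf : ContDiffOn ℝ 2 f (Set.Ioi a)) (hg : ContDiffOn ℝ 2 g (Set.Ioi a))
    (hg0 : ∀ r ∈ Set.Ioi a, g r ≠ 0)
    (hfeq : ∀ r ∈ Set.Ioi a, deriv (deriv f) r + b r * deriv f r = q r * f r)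
    (hgeq : ∀ r ∈ Set.Ioi a, deriv (deriv g) r + b r * deriv g r = q r * g r)
    (hfint : IntegrableOn (fun r => (f r ^ 2 + deriv f r ^ 2) * ρ r) (Set.Ioi a))
    (hgint : IntegrableOn (fun r => (g r ^ 2 + deriv g r ^ 2) * ρ r) (Set.Ioi a)) :
    ∃ c : ℝ, Set.EqOn f (fun r => c * g r) (Set.Ici a) := by
  have hW := weightedWronskian_eq_zero (fun r hr => (hρpos r hr).le) hρ hf hg hfeq hgeq hfint hgint
  obtain ⟨c, hc⟩ := exists_eqOn_const_mul_of_weightedWronskian_eq_zero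
    (fun r hr => (hρpos r hr).ne') (hf.differentiableOn two_ne_zero)
    (hg.differentiableOn two_ne_zero) hg0 hW
  exact ⟨c, hc.of_subset_closure hfc (hgc.const_mul c) Set.Ioi_subset_Ici_self
    (closure_Ioi a).ge⟩

end SturmLiouville

section RadialProfile

variable {E F : Type*} [NormedAddCommGroup E] [NormedSpace ℝ E]

lemma eqOn_comp_norm_smul {α : Type*} (g : ℝ → α) {e : E} (he : ‖e‖ = 1) :
    Set.EqOn g (fun r => g ‖r • e‖) (Set.Ici 0) := by
  intro r hr
  simp only [norm_smul, he, mul_one, Real.norm_of_nonneg (Set.mem_Ici.mp hr)]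

variable [NormedAddCommGroup F] [NormedSpace ℝ F] {g : ℝ → F}

lemma contDiffOn_Ici_of_contDiff_comp_norm [Nontrivial E] {n : WithTop ℕ∞}
    (hg : ContDiff ℝ n fun x : E => g ‖x‖) : ContDiffOn ℝ n g (Set.Ici 0) := by
  obtain ⟨e, he⟩ := exists_norm_eq E zero_le_one
  have hray : ContDiff ℝ n fun r : ℝ => g ‖r • e‖ := hg.comp (contDiff_id.smul contDiff_const)
  exact hray.contDiffOn.congr (eqOn_comp_norm_smul g he)

lemma norm_deriv_le_norm_fderiv_comp_norm {x : E} (hx : x ≠ 0)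
    (hg : DifferentiableAt ℝ (fun y : E => g ‖y‖) x) :
    ‖deriv g ‖x‖‖ ≤ ‖fderiv ℝ (fun y : E => g ‖y‖) x‖ := by
  have hnorm : 0 < ‖x‖ := norm_pos_iff.mpr hx
  obtain ⟨e, he, hxe⟩ : ∃ e : E, ‖e‖ = 1 ∧ ‖x‖ • e = x :=
    ⟨‖x‖⁻¹ • x, norm_smul_inv_norm (𝕜 := ℝ) hx, smul_inv_smul₀ hnorm.ne' x⟩
  have hray : HasDerivAt (fun r : ℝ => r • e) e ‖x‖ := by
    simpa using (hasDerivAt_id ‖x‖).smul_const e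
  have hcomp : HasDerivAt (fun r : ℝ => g ‖r • e‖) (fderiv ℝ (fun y : E => g ‖y‖) x e) ‖x‖ :=
    HasFDerivAt.comp_hasDerivAt_of_eq ‖x‖ hg.hasFDerivAt hray hxe.symm
  have hev : g =ᶠ[𝓝 ‖x‖] fun r => g ‖r • e‖ :=
    (eqOn_comp_norm_smul g he).eventuallyEq_of_mem (Ici_mem_nhds hnorm)
  rw [hev.deriv_eq, hcomp.deriv]
  simpa [he] using (fderiv ℝ (fun y : E => g ‖y‖) x).le_opNorm e

end RadialProfile

section RadialLaplacian

lemma hasFDerivAt_norm {E : Type*} [NormedAddCommGroup E] [InnerProductSpace ℝ E] {x : E}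
    (hx : x ≠ 0) : HasFDerivAt (fun y : E => ‖y‖) (‖x‖⁻¹ • innerSL ℝ x) x := by
  have hsqrt := (hasStrictFDerivAt_norm_sq x).hasFDerivAt.sqrt
    (pow_ne_zero 2 (norm_ne_zero_iff.mpr hx))
  simp only [Real.sqrt_sq (norm_nonneg _)] at hsqrt
  refine hsqrt.congr_fderiv ?_
  ext y
  simp only [one_div, mul_inv_rev, smul_apply, coe_innerSL_apply, nsmul_eq_mul, Nat.cast_ofNat,
    smul_eq_mul]
  ring

variable {N : ℕ} {g : ℝ → ℝ} {x : EuclideanSpace ℝ (Fin N)}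

lemma pd_comp_norm (i : Fin N) (hx : x ≠ 0) (hg : DifferentiableAt ℝ g ‖x‖) :
    pd i (fun y => g ‖y‖) x = deriv g ‖x‖ * (x i * ‖x‖⁻¹) := by
  have hcomp : HasFDerivAt (fun y => g ‖y‖) _ x :=
    hg.hasDerivAt.comp_hasFDerivAt x (hasFDerivAt_norm hx)
  rw [pd, hcomp.fderiv]
  simp [EuclideanSpace.inner_single_right, mul_comm]

lemma pd_pd_comp_norm (i : Fin N) (hx : x ≠ 0) (hg : ContDiffAt ℝ 2 g ‖x‖) :
    pd i (pd i fun y => g ‖y‖) x =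
      (deriv (deriv g) ‖x‖ / ‖x‖ ^ 2 - deriv g ‖x‖ / ‖x‖ ^ 3) * x i ^ 2 + deriv g ‖x‖ / ‖x‖ := by
  have hnorm : ‖x‖ ≠ 0 := norm_ne_zero_iff.mpr hx
  have hpd : pd i (fun y => g ‖y‖) =ᶠ[𝓝 x] fun y => deriv g ‖y‖ * (y i * ‖y‖⁻¹) := by
    filter_upwards [isOpen_ne.mem_nhds hx,
      continuous_norm.continuousAt.eventually (hg.eventually (by simp))] with y hy hgy
    exact pd_comp_norm i hy (hgy.differentiableAt two_ne_zero)
  have hderiv : HasFDerivAt (fun y : EuclideanSpace ℝ (Fin N) => deriv g ‖y‖) _ x :=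
    (differentiableAt_deriv_of_contDiffAt_two hg).hasDerivAt.comp_hasFDerivAt x
      (hasFDerivAt_norm hx)
  have hinv : HasFDerivAt (fun y : EuclideanSpace ℝ (Fin N) => ‖y‖⁻¹) _ x :=
    (hasDerivAt_inv hnorm).comp_hasFDerivAt x (hasFDerivAt_norm hx)
  have hcoord : HasFDerivAt (fun y : EuclideanSpace ℝ (Fin N) => y i) _ x :=
    (EuclideanSpace.proj i : EuclideanSpace ℝ (Fin N) →L[ℝ] ℝ).hasFDerivAt
  have hprod : HasFDerivAt (fun y => deriv g ‖y‖ * (y i * ‖y‖⁻¹)) _ x :=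
    hderiv.mul (hcoord.mul hinv)
  rw [pd, hpd.fderiv_eq, hprod.fderiv]
  simp only [neg_smul, smul_neg, smul_add, add_apply, neg_apply, smul_apply, coe_innerSL_apply,
    EuclideanSpace.inner_single_right, ringHom_apply, one_mul, smul_eq_mul, PiLp.proj_apply,
    PiLp.single_eq_same, mul_one]
  field_simp
  ring

theorem lap_comp_norm (hx : x ≠ 0) (hg : ContDiffAt ℝ 2 g ‖x‖) :
    lap (fun y => g ‖y‖) x = lapRad N g ‖x‖ := by
  have hnorm : ‖x‖ ≠ 0 := norm_ne_zero_iff.mpr hx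
  simp only [lap, pd_pd_comp_norm _ hx hg, Finset.sum_add_distrib, ← Finset.mul_sum,
    ← EuclideanSpace.real_norm_sq_eq, Finset.sum_const, Finset.card_univ, Fintype.card_fin,
    nsmul_eq_mul, lapRad]
  field_simp
  ring

end RadialLaplacian

section LinearizedOperator

variable {N : ℕ} {ω p : ℝ} {U : ℝ → ℝ}

lemma LminusRad_zero_eq_zero_iff {v : ℝ → ℝ} {r : ℝ} :
    LminusRad N ω p U 0 v r = 0 ↔
      deriv (deriv v) r + ((N : ℝ) - 1) / r * deriv v r =
        (ω - (lapRad N (fun s => U s ^ 2) r + U r ^ (p - 1))) * v r := by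
  simp only [LminusRad, Nat.cast_zero, zero_mul, zero_div, add_zero]
  constructor <;> intro h <;> linarith

lemma LminusRad_zero_self_eq_zero {x : EuclideanSpace ℝ (Fin N)} (hx : x ≠ 0)
    (hpos : 0 < U ‖x‖) (hU : ContDiffAt ℝ 2 U ‖x‖)
    (hsolves : -lap (fun y => U ‖y‖) x - U ‖x‖ * lap (fun y => U ‖y‖ ^ 2) x + ω * U ‖x‖
      - U ‖x‖ ^ p = 0) :
    LminusRad N ω p U 0 U ‖x‖ = 0 := by
  have hpow : U ‖x‖ ^ p = U ‖x‖ ^ (p - 1) * U ‖x‖ := by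
    rw [← Real.rpow_add_one hpos.ne', sub_add_cancel]
  rw [lap_comp_norm hx hU, lap_comp_norm (g := fun s => U s ^ 2) hx (hU.pow 2), hpow] at hsolves
  rw [LminusRad_zero_eq_zero_iff, ← lapRad]
  linarith

end LinearizedOperator

section ExponentialDecay

lemma integrableOn_sq_mul_pow_of_exp_decay {f : ℝ → ℝ} {C δ : ℝ} (hδ : 0 < δ)
    (hf : ContinuousOn f (Set.Ioi 0)) (hdecay : ∀ r ∈ Set.Ioi 0, |f r| ≤ C * exp (-δ * r))
    (n : ℕ) : IntegrableOn (fun r => f r ^ 2 * r ^ n) (Set.Ioi 0) := by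
  have hgamma := integrableOn_rpow_mul_exp_neg_mul_rpow (s := n) (p := 1) (b := 2 * δ)
    (neg_one_lt_zero.trans_le n.cast_nonneg) one_pos (by positivity)
  refine (hgamma.const_mul (C ^ 2)).mono'
    (((hf.pow 2).mul (continuousOn_pow n)).aestronglyMeasurable measurableSet_Ioi) ?_
  filter_upwards [ae_restrict_mem measurableSet_Ioi] with r (hr : 0 < r)
  have hsq : f r ^ 2 ≤ (C * exp (-δ * r)) ^ 2 :=
    sq_le_sq' (abs_le.mp (hdecay r hr)).1 (abs_le.mp (hdecay r hr)).2
  calc ‖f r ^ 2 * r ^ n‖ = f r ^ 2 * r ^ n := Real.norm_of_nonneg (by positivity)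
    _ ≤ (C * exp (-δ * r)) ^ 2 * r ^ n := by gcongr
    _ = C ^ 2 * (r ^ (n : ℝ) * exp (-(2 * δ) * r ^ (1 : ℝ))) := by
      rw [Real.rpow_natCast, Real.rpow_one, mul_pow, ← Real.exp_nat_mul]
      push_cast
      ring_nf

lemma IsGroundState.integrableOn_energy {N : ℕ} {ω p : ℝ}
    {u : EuclideanSpace ℝ (Fin N) → ℝ} {U : ℝ → ℝ} (hu : IsGroundState N ω p u) (hN : 0 < N)
    (hrad : ∀ x, u x = U ‖x‖) (n : ℕ) :
    IntegrableOn (fun r => (U r ^ 2 + deriv U r ^ 2) * r ^ n) (Set.Ioi 0) := by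
  have : NeZero N := ⟨hN.ne'⟩
  obtain rfl : u = fun x => U ‖x‖ := funext hrad
  obtain ⟨C₀, -, δ₀, hδ₀, hdecay₀⟩ := hu.decay 0
  obtain ⟨C₁, -, δ₁, hδ₁, hdecay₁⟩ := hu.decay 1
  have hUsmooth := (contDiffOn_Ici_of_contDiff_comp_norm hu.smooth).mono Set.Ioi_subset_Ici_self
  have hU : IntegrableOn (fun r => U r ^ 2 * r ^ n) (Set.Ioi 0) := by
    refine integrableOn_sq_mul_pow_of_exp_decay (C := C₀) hδ₀ hUsmooth.continuousOn
      (fun r hr => ?_) n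
    obtain ⟨x, rfl⟩ := exists_norm_eq (EuclideanSpace ℝ (Fin N)) (le_of_lt hr)
    simpa using hdecay₀ x
  have hU' : IntegrableOn (fun r => deriv U r ^ 2 * r ^ n) (Set.Ioi 0) := by
    refine integrableOn_sq_mul_pow_of_exp_decay (C := C₁) hδ₁
      (hUsmooth.continuousOn_deriv_of_isOpen isOpen_Ioi (by simp)) (fun r hr => ?_) n
    obtain ⟨x, rfl⟩ := exists_norm_eq (EuclideanSpace ℝ (Fin N)) (le_of_lt hr)
    have hderiv := norm_deriv_le_norm_fderiv_comp_norm (norm_pos_iff.mp hr)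
      (hu.smooth.differentiable (by simp) x)
    rw [← norm_iteratedFDeriv_one] at hderiv
    exact hderiv.trans (hdecay₁ x)
  simp only [add_mul]
  exact hU.add hU'

end ExponentialDecay

lemma hasDerivAt_pow_pred {N : ℕ} (hN : 0 < N) {r : ℝ} (hr : r ≠ 0) :
    HasDerivAt (fun s : ℝ => s ^ (N - 1)) (((N : ℝ) - 1) / r * r ^ (N - 1)) r := by
  obtain ⟨n, rfl⟩ := Nat.exists_eq_add_one.mpr hN
  refine (hasDerivAt_pow n r).congr_deriv ?_
  cases n with
  | zero => simp
  | succ k =>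
    push_cast
    field_simp
    simp only [add_tsub_cancel_right]
    ring

theorem stmt10_general (N : ℕ) (hN : 0 < N) (ω p : ℝ)
    (u : EuclideanSpace ℝ (Fin N) → ℝ) (U : ℝ → ℝ) (hu : ContDiff ℝ 2 u)
    (hsolves : ∀ x, -lap u x - u x * lap (fun y => (u y) ^ 2) x + ω * u x - (u x) ^ p = 0)
    (hpos : ∀ r, 0 ≤ r → 0 < U r) (hrad : ∀ x, u x = U ‖x‖)
    (hUint : IntegrableOn (fun r => ((U r) ^ 2 + (deriv U r) ^ 2) * r ^ (N - 1)) (Set.Ioi 0))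
    (v : ℝ → ℝ) (hvc : ContinuousOn v (Set.Ici 0)) (hv2 : ContDiffOn ℝ 2 v (Set.Ioi 0))
    (hint : IntegrableOn (fun r => ((v r) ^ 2 + (deriv v r) ^ 2) * r ^ (N - 1)) (Set.Ioi 0))
    (heq : ∀ r ∈ Set.Ioi (0 : ℝ), LminusRad N ω p U 0 v r = 0) :
    ∃ c : ℝ, ∀ r, 0 ≤ r → v r = c * U r := by
  have : NeZero N := ⟨hN.ne'⟩
  obtain rfl : u = fun x => U ‖x‖ := funext hrad
  have hU := contDiffOn_Ici_of_contDiff_comp_norm hu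
  have hU2 := hU.mono Set.Ioi_subset_Ici_self
  have hUeq : ∀ r ∈ Set.Ioi (0 : ℝ), LminusRad N ω p U 0 U r = 0 := by
    intro r hr
    obtain ⟨x, rfl⟩ := exists_norm_eq (EuclideanSpace ℝ (Fin N)) (le_of_lt hr)
    exact LminusRad_zero_self_eq_zero (norm_pos_iff.mp hr) (hpos _ hr.le)
      (hU2.contDiffAt (Ioi_mem_nhds hr)) (hsolves x)
  exact exists_eqOn_const_mul_of_integrableOn_energy (fun r hr => pow_pos hr (N - 1))
    (fun r hr => hasDerivAt_pow_pred hN (ne_of_gt hr)) hvc hU.continuousOn hv2 hU2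
    (fun r hr => (hpos r hr.le).ne') (fun r hr => LminusRad_zero_eq_zero_iff.mp (heq r hr))
    (fun r hr => LminusRad_zero_eq_zero_iff.mp (hUeq r hr)) hint hUint

/-- A finite-energy solution of the radial linearized equation `L₋,₀ v = 0` is a multiple of `U`. -/
theorem stmt10 (N : ℕ) (hN : 2 ≤ N) (ω p : ℝ) (hω : 0 < ω) (hp : 1 < p)
    (hpmax : 3 ≤ N → p < (3 * (N : ℝ) + 2) / ((N : ℝ) - 2))
    (u : EuclideanSpace ℝ (Fin N) → ℝ) (U : ℝ → ℝ)
    (hu : IsGroundState N ω p u)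
    (hU : StrictAntiOn U (Set.Ici 0) ∧ (∀ r, 0 ≤ r → 0 < U r) ∧ ∀ x, u x = U ‖x‖)
    
    (v : ℝ → ℝ) (hvc : ContinuousOn v (Set.Ici 0)) (hv2 : ContDiffOn ℝ 2 v (Set.Ioi 0))
    (hint : IntegrableOn (fun r => ((v r) ^ 2 + (deriv v r) ^ 2) * r ^ (N - 1)) (Set.Ioi 0))
    (heq : ∀ r ∈ Set.Ioi (0 : ℝ), LminusRad N ω p U 0 v r = 0) :
    ∃ c : ℝ, ∀ r, 0 ≤ r → v r = c * U r := by
  have hN0 : 0 < N := by omega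
  exact stmt10_general N hN0 ω p u U (hu.smooth.of_le (WithTop.coe_le_coe.mpr le_top)) hu.solves
    hU.2.1 hU.2.2 (hu.integrableOn_energy hN0 hU.2.2 (N - 1)) v hvc hv2 hint heq

end
end

section
/- Let N ≥ 1 be an integer, ω > 0 and p > 1. Let u : ℝ^N → ℝ be a smooth positive function solving (QLS) pointwise on ℝ^N, and assume u and all its partial derivatives up to order two decay exponentially: there exist C, δ > 0 with |∂^α u(x)| ≤ C e^{−δ|x|} for every multi-index α with |α| ≤ 2 and every x ∈ ℝ^N. Then ∫_{ℝ^N} (L₊u)(x)·u(x) dx = 8∫_{ℝ^N} u²|∇u|² dx − (p−1)∫_{ℝ^N} u^{p+1} dx. -/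
open MeasureTheory Real Filter Topology

noncomputable section

/-!
Subtracting `u` times (QLS) from `(L₊u)u` leaves `-2u²Δ(u²) - (p - 1)u^(p+1)`. With `v = u²`,
Green's identity `∫ vΔv = -∫ |∇v|²` and `|∇v|² = 4u²|∇u|²` give the result. By Hölder, Green's
identity applies to `v` as soon as `u` and its derivatives of order at most two are in `L⁴`.
-/

section ExponentialDecay

variable {E : Type*} [NormedAddCommGroup E] [NormedSpace ℝ E] [FiniteDimensional ℝ E]
  [MeasurableSpace E] [BorelSpace E] {μ : Measure E} [μ.IsAddHaarMeasure] {δ : ℝ}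

lemma integrable_exp_neg_mul_norm (hδ : 0 < δ) :
    Integrable (fun x : E => exp (-δ * ‖x‖)) μ := by
  have hbracket : Integrable (fun x : E => (1 + ‖x‖) ^ (-(Module.finrank ℝ E + 1 : ℝ))) μ :=
    integrable_one_add_norm (lt_add_one _)
  have htendsto : Tendsto (fun x : E => 1 + ‖x‖) (cocompact E) atTop :=
    tendsto_atTop_add_const_left _ 1 tendsto_norm_cocompact_atTop
  have hshift : (fun x : E => exp (-δ * ‖x‖)) = fun x => exp δ * exp (-δ * (1 + ‖x‖)) := by
    funext x
    rw [← exp_add]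
    ring_nf
  have hcont : Continuous fun x : E => exp (-δ * ‖x‖) := by fun_prop
  refine hcont.locallyIntegrable.integrable_of_isBigO_cocompact ?_
    (hbracket.integrableAtFilter _)
  rw [hshift]
  exact ((isLittleO_exp_neg_mul_rpow_atTop hδ _).isBigO.comp_tendsto htendsto).const_mul_left _

lemma memLp_exp_neg_mul_norm (hδ : 0 < δ) (q : ENNReal) :
    MemLp (fun x : E => exp (-δ * ‖x‖)) q μ := by
  have hmeas : AEStronglyMeasurable (fun x : E => exp (-δ * ‖x‖)) μ := by fun_prop
  rcases eq_or_ne q 0 with rfl | hq_zero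
  · exact memLp_zero_iff_aestronglyMeasurable.mpr hmeas
  rcases eq_or_ne q ⊤ with rfl | hq_top
  · refine memLp_top_of_bound hmeas 1 (.of_forall fun x => ?_)
    rw [norm_of_nonneg (exp_pos _).le, exp_le_one_iff, neg_mul, neg_nonpos]
    positivity
  have hrpow : (fun x : E => ‖exp (-δ * ‖x‖)‖ ^ q.toReal) =
      fun x => exp (-(δ * q.toReal) * ‖x‖) := by
    funext x
    rw [norm_of_nonneg (exp_pos _).le, ← exp_mul]
    ring_nf
  rw [← integrable_norm_rpow_iff hmeas hq_zero hq_top, hrpow]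
  exact integrable_exp_neg_mul_norm (mul_pos hδ (ENNReal.toReal_pos hq_zero hq_top))

lemma memLp_of_norm_le_exp_neg_mul_norm {F : Type*} [NormedAddCommGroup F] {f : E → F} {C : ℝ}
    {q : ENNReal} (hδ : 0 < δ) (hf : AEStronglyMeasurable f μ)
    (hbound : ∀ x, ‖f x‖ ≤ C * exp (-δ * ‖x‖)) : MemLp f q μ :=
  ((memLp_exp_neg_mul_norm hδ q).const_mul C).mono' hf (.of_forall hbound)

end ExponentialDecay

lemma integrable_rpow_of_memLp {α : Type*} [MeasurableSpace α] {μ : Measure α} {f : α → ℝ} {q : ℝ}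
    (hq : 0 < q) (hf_nonneg : ∀ x, 0 ≤ f x) (hf : MemLp f (ENNReal.ofReal q) μ) :
    Integrable (fun x => f x ^ q) μ := by
  simpa only [norm_of_nonneg (hf_nonneg _), ENNReal.toReal_ofReal hq.le] using
    hf.integrable_norm_rpow (ENNReal.ofReal_pos.mpr hq).ne' ENNReal.ofReal_ne_top

variable {N : ℕ}

section PartialDerivatives

variable {F : Type*} [NormedAddCommGroup F] [NormedSpace ℝ F]
  {f : EuclideanSpace ℝ (Fin N) → F}

lemma contDiff_pd {n : WithTop ℕ∞} (i : Fin N) (hf : ContDiff ℝ (n + 1) f) :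
    ContDiff ℝ n (pd i f) :=
  (hf.fderiv_right le_rfl).clm_apply contDiff_const

lemma continuous_pd (i : Fin N) (hf : ContDiff ℝ 1 f) : Continuous (pd i f) :=
  (contDiff_pd (n := 0) i (by rwa [zero_add])).continuous

lemma norm_pd_le (i : Fin N) (f : EuclideanSpace ℝ (Fin N) → F) (x : EuclideanSpace ℝ (Fin N)) :
    ‖pd i f x‖ ≤ ‖iteratedFDeriv ℝ 1 f x‖ := by
  simpa only [pd, norm_iteratedFDeriv_one, PiLp.norm_single, norm_one, mul_one] using
    (fderiv ℝ f x).le_opNorm (EuclideanSpace.single i 1)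

lemma pd_pd_eq_iteratedFDeriv (i j : Fin N) (hf : ContDiff ℝ 2 f)
    (x : EuclideanSpace ℝ (Fin N)) :
    pd i (pd j f) x =
      iteratedFDeriv ℝ 2 f x ![EuclideanSpace.single i 1, EuclideanSpace.single j 1] := by
  have hfderiv : DifferentiableAt ℝ (fderiv ℝ f) x :=
    (hf.fderiv_right le_rfl).differentiable one_ne_zero x
  rw [iteratedFDeriv_two_apply]
  change fderiv ℝ (fun y => fderiv ℝ f y (EuclideanSpace.single j 1)) x _ = _
  rw [fderiv_clm_apply hfderiv (differentiableAt_const _)]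
  simp

lemma norm_pd_pd_le (i j : Fin N) (hf : ContDiff ℝ 2 f) (x : EuclideanSpace ℝ (Fin N)) :
    ‖pd i (pd j f) x‖ ≤ ‖iteratedFDeriv ℝ 2 f x‖ := by
  rw [pd_pd_eq_iteratedFDeriv i j hf]
  simpa [Fin.prod_univ_two] using
    (iteratedFDeriv ℝ 2 f x).le_opNorm ![EuclideanSpace.single i 1, EuclideanSpace.single j 1]

variable {C δ : ℝ} {q : ENNReal}

lemma memLp_pd_of_exp_decay (i : Fin N) (hδ : 0 < δ) (hf : ContDiff ℝ 1 f)
    (hdecay : ∀ x, ‖iteratedFDeriv ℝ 1 f x‖ ≤ C * exp (-δ * ‖x‖)) : MemLp (pd i f) q :=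
  memLp_of_norm_le_exp_neg_mul_norm hδ (continuous_pd i hf).aestronglyMeasurable
    fun x => (norm_pd_le i f x).trans (hdecay x)

lemma memLp_pd_pd_of_exp_decay (i j : Fin N) (hδ : 0 < δ) (hf : ContDiff ℝ 2 f)
    (hdecay : ∀ x, ‖iteratedFDeriv ℝ 2 f x‖ ≤ C * exp (-δ * ‖x‖)) : MemLp (pd i (pd j f)) q :=
  memLp_of_norm_le_exp_neg_mul_norm hδ (continuous_pd i (contDiff_pd j hf)).aestronglyMeasurable
    fun x => (norm_pd_pd_le i j hf x).trans (hdecay x)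

end PartialDerivatives

section Square

variable {u : EuclideanSpace ℝ (Fin N) → ℝ}

lemma pd_sq (i : Fin N) (hu : Differentiable ℝ u) :
    pd i (fun y => u y ^ 2) = fun x => 2 * (u x * pd i u x) := by
  funext x
  simp [pd, fderiv_fun_pow 2 (hu x), mul_assoc]

lemma pd_pd_sq (i : Fin N) (hu : ContDiff ℝ 2 u) :
    pd i (pd i (fun y => u y ^ 2)) =
      fun x => 2 * (u x * pd i (pd i u) x + pd i u x * pd i u x) := by
  have hd : Differentiable ℝ u := hu.differentiable two_ne_zero
  have hd' : Differentiable ℝ (pd i u) := (contDiff_pd i hu).differentiable one_ne_zero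
  funext x
  rw [pd_sq i hd, pd, fderiv_const_mul ((hd x).fun_mul (hd' x)), fderiv_fun_mul (hd x) (hd' x)]
  simp [pd, mul_add]

lemma gradsq_sq (hu : Differentiable ℝ u) (x : EuclideanSpace ℝ (Fin N)) :
    gradsq (fun y => u y ^ 2) x = 4 * (u x ^ 2 * gradsq u x) := by
  simp only [gradsq, pd_sq _ hu, Finset.mul_sum]
  exact Finset.sum_congr rfl fun i _ => by ring

variable {q r : ENNReal} [ENNReal.HolderTriple q q r]

lemma memLp_sq_of_holderTriple (hu_mem : MemLp u q) : MemLp (fun x => u x ^ 2) r := by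
  simpa only [sq] using hu_mem.mul' hu_mem

lemma memLp_pd_sq {i : Fin N} (hu : Differentiable ℝ u) (hu_mem : MemLp u q)
    (hpd_mem : MemLp (pd i u) q) : MemLp (pd i (fun y => u y ^ 2)) r := by
  rw [pd_sq i hu]
  exact (hpd_mem.mul hu_mem).const_mul 2

lemma memLp_pd_pd_sq {i : Fin N} (hu : ContDiff ℝ 2 u) (hu_mem : MemLp u q)
    (hpd_mem : MemLp (pd i u) q) (hpd_pd_mem : MemLp (pd i (pd i u)) q) :
    MemLp (pd i (pd i (fun y => u y ^ 2))) r := by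
  rw [pd_pd_sq i hu]
  exact ((hpd_pd_mem.mul hu_mem).add (hpd_mem.mul hpd_mem)).const_mul 2

end Square

section Green

variable {f g : EuclideanSpace ℝ (Fin N) → ℝ}

lemma integral_mul_pd_eq_neg_integral_pd_mul {i : Fin N}
    (hf : Differentiable ℝ f) (hg : Differentiable ℝ g) (hf_mem : MemLp f 2) (hg_mem : MemLp g 2)
    (hpd_f_mem : MemLp (pd i f) 2) (hpd_g_mem : MemLp (pd i g) 2) :
    ∫ x, f x * pd i g x = -∫ x, pd i f x * g x :=
  integral_mul_fderiv_eq_neg_fderiv_mul_of_integrable (hpd_f_mem.integrable_mul hg_mem)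
    (hf_mem.integrable_mul hpd_g_mem) (hf_mem.integrable_mul hg_mem)
    (fun x _ => hf x) (fun x _ => hg x)

lemma memLp_lap {q : ENNReal} (hpd_pd_mem : ∀ i, MemLp (pd i (pd i f)) q) : MemLp (lap f) q :=
  memLp_finsetSum _ fun i _ => hpd_pd_mem i

lemma integral_mul_lap_self (hf : ContDiff ℝ 2 f) (hf_mem : MemLp f 2)
    (hpd_mem : ∀ i, MemLp (pd i f) 2) (hpd_pd_mem : ∀ i, MemLp (pd i (pd i f)) 2) :
    ∫ x, f x * lap f x = -∫ x, gradsq f x := by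
  have hd : Differentiable ℝ f := hf.differentiable two_ne_zero
  have hd' (i : Fin N) : Differentiable ℝ (pd i f) :=
    (contDiff_pd i hf).differentiable one_ne_zero
  calc ∫ x, f x * lap f x = ∑ i, ∫ x, f x * pd i (pd i f) x := by
        simp only [lap, Finset.mul_sum]
        exact integral_finsetSum _ fun i _ => hf_mem.integrable_mul (hpd_pd_mem i)
    _ = ∑ i, -∫ x, pd i f x ^ 2 := by
        simp only [sq]
        exact Finset.sum_congr rfl fun i _ => integral_mul_pd_eq_neg_integral_pd_mul hd (hd' i)
          hf_mem (hpd_mem i) (hpd_mem i) (hpd_pd_mem i)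
    _ = -∫ x, gradsq f x := by
        simp only [gradsq]
        rw [Finset.sum_neg_distrib, integral_finsetSum _ fun i _ => (hpd_mem i).integrable_sq]

end Green

section GreenSquare

instance holderTriple_four_four_two : ENNReal.HolderTriple 4 4 2 where
  inv_add_inv_eq_inv := by
    rw [← two_mul, show (4 : ENNReal) = 2 * 2 by norm_num, ENNReal.mul_inv (by simp) (by simp),
      ← mul_assoc, ENNReal.mul_inv_cancel (by simp) (by simp), one_mul]

variable {u : EuclideanSpace ℝ (Fin N) → ℝ}

lemma integrable_sq_mul_lap_sq (hu : ContDiff ℝ 2 u) (hu_mem : MemLp u 4)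
    (hpd_mem : ∀ i, MemLp (pd i u) 4) (hpd_pd_mem : ∀ i, MemLp (pd i (pd i u)) 4) :
    Integrable fun x => u x ^ 2 * lap (fun y => u y ^ 2) x :=
  have hsq_mem : MemLp (fun x => u x ^ 2) 2 := memLp_sq_of_holderTriple hu_mem
  have hlap_mem : MemLp (lap fun y => u y ^ 2) 2 :=
    memLp_lap fun i => memLp_pd_pd_sq hu hu_mem (hpd_mem i) (hpd_pd_mem i)
  hsq_mem.integrable_mul hlap_mem

lemma integral_sq_mul_lap_sq (hu : ContDiff ℝ 2 u) (hu_mem : MemLp u 4)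
    (hpd_mem : ∀ i, MemLp (pd i u) 4) (hpd_pd_mem : ∀ i, MemLp (pd i (pd i u)) 4) :
    ∫ x, u x ^ 2 * lap (fun y => u y ^ 2) x = -(4 * ∫ x, u x ^ 2 * gradsq u x) := by
  have hd : Differentiable ℝ u := hu.differentiable two_ne_zero
  rw [integral_mul_lap_self (hu.pow 2) (memLp_sq_of_holderTriple hu_mem)
    (fun i => memLp_pd_sq hd hu_mem (hpd_mem i))
    (fun i => memLp_pd_pd_sq hu hu_mem (hpd_mem i) (hpd_pd_mem i))]
  simp only [gradsq_sq hd, integral_const_mul]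

end GreenSquare

lemma Lplus_self_mul_self {ω p : ℝ} {u : EuclideanSpace ℝ (Fin N) → ℝ}
    {x : EuclideanSpace ℝ (Fin N)} (hpos : 0 < u x)
    (hsol : -lap u x - u x * lap (fun y => u y ^ 2) x + ω * u x - u x ^ p = 0) :
    Lplus ω p u u x * u x =
      -2 * (u x ^ 2 * lap (fun y => u y ^ 2) x) - (p - 1) * u x ^ (p + 1) := by
  have hpow : u x ^ (p - 1) * u x = u x ^ p := by
    rw [← rpow_add_one hpos.ne', sub_add_cancel]
  simp only [Lplus, ← sq]
  rw [rpow_add_one hpos.ne']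
  linear_combination u x * hsol - p * u x * hpow

theorem stmt15_general (N : ℕ) (ω p : ℝ) (u : EuclideanSpace ℝ (Fin N) → ℝ)
    (hu : ContDiff ℝ 2 u) (hpos : ∀ x, 0 < u x)
    (hsol : ∀ x, -lap u x - u x * lap (fun y => u y ^ 2) x + ω * u x - u x ^ p = 0)
    (hu_mem : MemLp u 4) (hpd_mem : ∀ i, MemLp (pd i u) 4)
    (hpd_pd_mem : ∀ i, MemLp (pd i (pd i u)) 4) (hpow : Integrable fun x => u x ^ (p + 1)) :
    (∫ x, Lplus ω p u u x * u x)
      = 8 * (∫ x, u x ^ 2 * gradsq u x) - (p - 1) * ∫ x, u x ^ (p + 1) := by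
  simp only [Lplus_self_mul_self (hpos _) (hsol _)]
  rw [integral_sub
    ((integrable_sq_mul_lap_sq hu hu_mem hpd_mem hpd_pd_mem).const_mul _) (hpow.const_mul _),
    integral_const_mul, integral_const_mul,
    integral_sq_mul_lap_sq hu hu_mem hpd_mem hpd_pd_mem]
  ring

/-- The quadratic form of `L₊` at `u`: `∫ (L₊u)·u = 8 ∫ u²|∇u|² − (p−1) ∫ u^{p+1}`. -/
theorem stmt15 (N : ℕ) (hN : 1 ≤ N) (ω p : ℝ) (hω : 0 < ω) (hp : 1 < p)
    (u : EuclideanSpace ℝ (Fin N) → ℝ) (hsm : ContDiff ℝ (⊤ : ℕ∞) u) (hpos : ∀ x, 0 < u x)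
    (hsol : ∀ x, -lap u x - u x * lap (fun y => (u y) ^ 2) x + ω * u x - (u x) ^ p = 0)
    (hdec : ∃ C > 0, ∃ δ > 0, ∀ k : ℕ, k ≤ 2 → ∀ x,
      ‖iteratedFDeriv ℝ k u x‖ ≤ C * Real.exp (-δ * ‖x‖)) :
    (∫ x, Lplus ω p u u x * u x)
      = 8 * (∫ x, (u x) ^ 2 * gradsq u x) - (p - 1) * ∫ x, u x ^ (p + 1) := by
  obtain ⟨C, -, δ, hδ, hdecay⟩ := hdec
  have hu : ContDiff ℝ 2 u := contDiff_infty.mp hsm 2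
  have hu_mem (q : ENNReal) : MemLp u q :=
    memLp_of_norm_le_exp_neg_mul_norm hδ hu.continuous.aestronglyMeasurable
      fun x => norm_iteratedFDeriv_zero (𝕜 := ℝ) (f := u) ▸ hdecay 0 zero_le_two x
  exact stmt15_general N ω p u hu hpos hsol (hu_mem 4)
    (fun i => memLp_pd_of_exp_decay i hδ (hu.of_le one_le_two) (hdecay 1 one_le_two))
    (fun i => memLp_pd_pd_of_exp_decay i i hδ hu (hdecay 2 le_rfl))
    (integrable_rpow_of_memLp (by linarith) (fun x => (hpos x).le) (hu_mem _))

end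
end

section
/- Let ω > 0 and p > 1. Let u : ℝ² → ℝ be a smooth positive function, not identically zero, solving (QLS) pointwise on ℝ², and assume u and all its partial derivatives up to order two decay exponentially: there exist C, δ > 0 with |∂^α u(x)| ≤ C e^{−δ|x|} for every multi-index α with |α| ≤ 2 and every x ∈ ℝ². Then ∫_{ℝ²} (L₊u)(x)·u(x) dx = −2∫_{ℝ²} |∇u|² dx − ((p−1)²/(p+1))∫_{ℝ²} u^{p+1} dx, and in particular ∫_{ℝ²} (L₊u)·u dx < 0. -/
open MeasureTheory Real Filter Topology

noncomputable section

/-!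
Write `A = ∫ |∇u|²`, `B = ∫ |∇(u²)|²`, `M = ∫ u²`, `P = ∫ u^(p+1)`.  Integrating by parts,
`∫ (L₊u) u = A + 3 B + ω M - p P`.  Testing the equation against `u` gives the Nehari identity
`A + B + ω M - P = 0`.  Testing it against the dilation field `x·∇u` gives the Pohozaev identity
`(N - 2) / 2 * (A + B / 2) + N * (ω M / 2 - P / (p + 1)) = 0`: since `u (x·∇u) = x·∇(u²) / 2`, the
quasilinear term is handled by applying the Rellich identity
`∫ (x·∇v) Δv = (N - 2) / 2 * ∫ |∇v|²` to `v = u²` as well as to `v = u`.  In every dimension `N`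
the two identities eliminate `B` and `M`, and both remaining coefficients are negative as soon as
`p > max 1 ((3 N - 2) / (N + 2))`, which for `N = 2` reads `p > 1`.
-/

open Asymptotics Module

section ExpDecay

section Norm

variable {E : Type*} [SeminormedAddCommGroup E]

theorem isBigO_one_add_norm_pow_exp {ε : ℝ} (hε : 0 < ε) (k : ℕ) :
    (fun x : E => (1 + ‖x‖) ^ k) =O[⊤] fun x => exp (ε * ‖x‖) := by
  refine isBigO_top.2 ⟨k.factorial / ε ^ k * exp ε, fun x => ?_⟩
  rw [norm_of_nonneg (by positivity), norm_of_nonneg (exp_pos _).le]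
  calc (1 + ‖x‖) ^ k
      = k.factorial / ε ^ k * ((ε * (1 + ‖x‖)) ^ k / k.factorial) := by
        rw [mul_pow]; field_simp
    _ ≤ k.factorial / ε ^ k * exp (ε * (1 + ‖x‖)) := by
        gcongr; exact pow_div_factorial_le_exp _ (by positivity) k
    _ = k.factorial / ε ^ k * exp ε * exp (ε * ‖x‖) := by
        rw [mul_add, mul_one, exp_add, mul_assoc]

theorem isBigO_exp_neg_mul_norm {δ δ' : ℝ} (h : δ ≤ δ') :
    (fun x : E => exp (-δ' * ‖x‖)) =O[⊤] fun x => exp (-δ * ‖x‖) :=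
  isBigO_of_le _ fun x => by
    rw [norm_of_nonneg (exp_pos _).le, norm_of_nonneg (exp_pos _).le]
    gcongr

end Norm

variable {E F : Type*} [NormedAddCommGroup E] [NormedSpace ℝ E] [NormedAddCommGroup F]
  [NormedSpace ℝ F]

theorem isBigO_iteratedFDeriv_mul {A : Type*} [NormedRing A] [NormedAlgebra ℝ A] {n : ℕ}
    {f g : E → A} {a b : E → ℝ} (hf : ContDiff ℝ n f) (hg : ContDiff ℝ n g)
    (hfa : ∀ k ≤ n, iteratedFDeriv ℝ k f =O[⊤] a)
    (hgb : ∀ k ≤ n, iteratedFDeriv ℝ k g =O[⊤] b) {k : ℕ} (hk : k ≤ n) :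
    iteratedFDeriv ℝ k (fun x => f x * g x) =O[⊤] fun x => a x * b x := by
  have leibniz : iteratedFDeriv ℝ k (fun x => f x * g x) =O[⊤] fun x =>
      ∑ j ∈ Finset.range (k + 1),
        (k.choose j : ℝ) * ‖iteratedFDeriv ℝ j f x‖ * ‖iteratedFDeriv ℝ (k - j) g x‖ :=
    isBigO_of_le _ fun x =>
      (norm_iteratedFDeriv_mul_le hf hg x (mod_cast hk)).trans (le_norm_self _)
  refine leibniz.trans (IsBigO.fun_sum fun j hj => ?_)
  have hjk : j ≤ k := Nat.lt_succ_iff.1 (Finset.mem_range.1 hj)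
  exact ((hfa j (hjk.trans hk)).norm_left.const_mul_left _).mul
    (hgb (k - j) ((Nat.sub_le k j).trans hk)).norm_left

/-- `f` is of class `C^n` and its derivatives of order at most `n` decay exponentially, with a
common rate.  The filter `⊤` makes the bounds hold on all of `E`, not only near infinity. -/
structure HasExpDecay (n : ℕ) (f : E → F) : Prop where
  contDiff : ContDiff ℝ n f
  isBigO : ∃ δ > 0, ∀ k ≤ n, iteratedFDeriv ℝ k f =O[⊤] fun x => exp (-δ * ‖x‖)

theorem hasExpDecay_of_norm_le {n : ℕ} {f : E → F} {C δ : ℝ} (hf : ContDiff ℝ n f) (hδ : 0 < δ)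
    (hbound : ∀ k ≤ n, ∀ x, ‖iteratedFDeriv ℝ k f x‖ ≤ C * exp (-δ * ‖x‖)) : HasExpDecay n f :=
  ⟨hf, δ, hδ, fun k hk => isBigO_top.2
    ⟨C, fun x => by simpa only [norm_of_nonneg (exp_pos _).le] using hbound k hk x⟩⟩

theorem hasExpDecay_zero_iff {f : E → F} :
    HasExpDecay 0 f ↔ Continuous f ∧ ∃ δ > 0, f =O[⊤] fun x => exp (-δ * ‖x‖) := by
  have order_zero (δ : ℝ) : (∀ k ≤ 0, iteratedFDeriv ℝ k f =O[⊤] fun x => exp (-δ * ‖x‖)) ↔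
      f =O[⊤] fun x => exp (-δ * ‖x‖) := by
    simp [isBigO_top]
  refine ⟨fun h => ⟨h.contDiff.continuous, ?_⟩, fun h => ⟨contDiff_zero.2 h.1, ?_⟩⟩
  · simpa only [order_zero] using h.isBigO
  · simpa only [order_zero] using h.2

namespace HasExpDecay

variable {m n : ℕ}

theorem of_le {f : E → F} (hf : HasExpDecay n f) (hmn : m ≤ n) : HasExpDecay m f :=
  let ⟨δ, hδ, h⟩ := hf.isBigO
  ⟨hf.contDiff.of_le (mod_cast hmn), δ, hδ, fun k hk => h k (hk.trans hmn)⟩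

protected theorem differentiable {f : E → F} (hf : HasExpDecay (n + 1) f) :
    Differentiable ℝ f :=
  hf.contDiff.differentiable (by simp)

protected theorem add {f g : E → F} (hf : HasExpDecay n f) (hg : HasExpDecay n g) :
    HasExpDecay n fun x => f x + g x := by
  obtain ⟨δ, hδ, hfδ⟩ := hf.isBigO
  obtain ⟨δ', hδ', hgδ'⟩ := hg.isBigO
  refine ⟨hf.contDiff.add hg.contDiff, min δ δ', lt_min hδ hδ', fun k hk => ?_⟩
  have hkn : (k : WithTop ℕ∞) ≤ n := mod_cast hk
  rw [fun_iteratedFDeriv_add (hf.contDiff.of_le hkn) (hg.contDiff.of_le hkn)]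
  exact ((hfδ k hk).trans (isBigO_exp_neg_mul_norm (min_le_left _ _))).add
    ((hgδ' k hk).trans (isBigO_exp_neg_mul_norm (min_le_right _ _)))

protected theorem zero : HasExpDecay n fun _ : E => (0 : F) :=
  ⟨contDiff_const, 1, one_pos, fun k _ => isBigO_top.2 ⟨0, fun x => by simp⟩⟩

protected theorem sum {ι : Type*} (s : Finset ι) {f : ι → E → F}
    (hf : ∀ i, HasExpDecay n (f i)) : HasExpDecay n fun x => ∑ i ∈ s, f i x := by
  classical
  induction s using Finset.induction_on with
  | empty => simpa using HasExpDecay.zero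
  | insert i s hi ih => simpa only [Finset.sum_insert hi] using (hf i).add ih

theorem fderiv_apply {f : E → F} (hf : HasExpDecay (n + 1) f) (v : E) :
    HasExpDecay n fun x => fderiv ℝ f x v := by
  obtain ⟨δ, hδ, hfδ⟩ := hf.isBigO
  have hderiv : ContDiff ℝ n (fderiv ℝ f) := hf.contDiff.fderiv_right (by simp)
  refine ⟨hderiv.clm_apply contDiff_const, δ, hδ, fun k hk => ?_⟩
  refine (IsBigO.of_bound ‖v‖ (Eventually.of_forall fun x => ?_)).trans (hfδ (k + 1) (by lia))
  simpa only [norm_iteratedFDeriv_fderiv] using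
    norm_iteratedFDeriv_clm_apply_const (c := v) hderiv.contDiffAt (mod_cast hk)

section Algebra

variable {A : Type*} [NormedRing A] [NormedAlgebra ℝ A] {f g : E → A}

protected theorem mul (hf : HasExpDecay n f) (hg : HasExpDecay n g) :
    HasExpDecay n fun x => f x * g x := by
  obtain ⟨δ, hδ, hfδ⟩ := hf.isBigO
  obtain ⟨δ', hδ', hgδ'⟩ := hg.isBigO
  refine ⟨hf.contDiff.mul hg.contDiff, δ + δ', add_pos hδ hδ', fun k hk => ?_⟩
  simpa only [← exp_add, ← add_mul, ← neg_add] using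
    isBigO_iteratedFDeriv_mul hf.contDiff hg.contDiff hfδ hgδ' hk

protected theorem sq (hf : HasExpDecay n f) : HasExpDecay n fun x => f x ^ 2 := by
  simpa only [sq] using hf.mul hf

theorem temperate_mul (hg : g.HasTemperateGrowth) (hf : HasExpDecay n f) :
    HasExpDecay n fun x => g x * f x := by
  obtain ⟨δ, hδ, hfδ⟩ := hf.isBigO
  obtain ⟨m, hgm⟩ := hg.isBigO_uniform n
  have hgδ (k : ℕ) (hk : k ≤ n) : iteratedFDeriv ℝ k g =O[⊤] fun x => exp (δ / 2 * ‖x‖) :=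
    (hgm k hk).trans (isBigO_one_add_norm_pow_exp (half_pos hδ) m)
  have hgn : ContDiff ℝ n g := hg.1.of_le (mod_cast le_top)
  refine ⟨hgn.mul hf.contDiff, δ / 2, half_pos hδ, fun k hk => ?_⟩
  have hrate : δ / 2 + -δ = -(δ / 2) := by ring
  simpa only [← exp_add, ← add_mul, hrate] using
    isBigO_iteratedFDeriv_mul hgn hf.contDiff hgδ hfδ hk

theorem const_mul (hf : HasExpDecay n f) (c : A) : HasExpDecay n fun x => c * f x :=
  temperate_mul (.const c) hf

end Algebra

protected theorem rpow {f : E → ℝ} (hf : HasExpDecay 0 f) (hpos : ∀ x, 0 < f x) {q : ℝ}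
    (hq : 0 < q) : HasExpDecay 0 fun x => f x ^ q := by
  obtain ⟨hcont, δ, hδ, hfδ⟩ := hasExpDecay_zero_iff.1 hf
  refine hasExpDecay_zero_iff.2
    ⟨hcont.rpow_const fun x => Or.inl (hpos x).ne', δ * q, mul_pos hδ hq, ?_⟩
  have hrate (x : E) : exp (-(δ * q) * ‖x‖) = exp (-δ * ‖x‖) ^ q := by
    rw [← exp_mul]; ring_nf
  simpa only [hrate] using hfδ.rpow hq.le (Eventually.of_forall fun x => (exp_pos _).le)

protected theorem integrable [FiniteDimensional ℝ E] [MeasurableSpace E] [BorelSpace E]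
    {μ : Measure E} [μ.IsAddHaarMeasure] {f : E → F} (hf : HasExpDecay n f) :
    Integrable f μ := by
  obtain ⟨hcont, δ, hδ, hfδ⟩ := hasExpDecay_zero_iff.1 (hf.of_le n.zero_le)
  have hexp : (fun x : E => exp (-δ * ‖x‖)) =O[⊤]
      fun x => (1 + ‖x‖) ^ (-((finrank ℝ E + 1 : ℕ) : ℝ)) := by
    have := (isBigO_one_add_norm_pow_exp (E := E) hδ (finrank ℝ E + 1)).inv_rev
      (Eventually.of_forall fun x h => absurd h (by positivity))
    refine (this.congr_left fun x => ?_).congr_right fun x => ?_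
    · rw [← exp_neg, neg_mul]
    · rw [rpow_neg (by positivity), rpow_natCast]
  exact (hfδ.trans hexp).integrable hcont.aestronglyMeasurable
    (integrable_one_add_norm (by push_cast; linarith))

end HasExpDecay

end ExpDecay

section Euler

variable {E : Type*} [NormedAddCommGroup E] [NormedSpace ℝ E]

/-- The Euler derivative `x·∇f`, the generator of dilations of `f`. -/
def eulerDeriv (f : E → ℝ) (x : E) : ℝ :=
  fderiv ℝ f x x

theorem eulerDeriv_comp {V : ℝ → ℝ} {V' : ℝ} {f : E → ℝ} {x : E} (hV : HasDerivAt V V' (f x))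
    (hf : DifferentiableAt ℝ f x) :
    eulerDeriv (fun y => V (f y)) x = V' * eulerDeriv f x := by
  have h : HasFDerivAt (fun y => V (f y)) (V' • fderiv ℝ f x) x :=
    hV.comp_hasFDerivAt x hf.hasFDerivAt
  simp [eulerDeriv, h.fderiv]

theorem eulerDeriv_sq {f : E → ℝ} {x : E} (hf : DifferentiableAt ℝ f x) :
    eulerDeriv (fun y => f y ^ 2) x = 2 * f x * eulerDeriv f x := by
  simpa using eulerDeriv_comp (hasDerivAt_pow 2 (f x)) hf

end Euler

section PartialDerivatives

variable {N : ℕ} {f : EuclideanSpace ℝ (Fin N) → ℝ}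

theorem hasTemperateGrowth_coord (i : Fin N) :
    (fun x : EuclideanSpace ℝ (Fin N) => x i).HasTemperateGrowth :=
  (EuclideanSpace.proj i : EuclideanSpace ℝ (Fin N) →L[ℝ] ℝ).hasTemperateGrowth

theorem pd_coord (i : Fin N) (x : EuclideanSpace ℝ (Fin N)) : pd i (fun y => y i) x = 1 := by
  have h : HasFDerivAt (fun y => y i) (EuclideanSpace.proj i : _ →L[ℝ] ℝ) x :=
    (EuclideanSpace.proj i : _ →L[ℝ] ℝ).hasFDerivAt
  simp [pd, h.fderiv]

theorem pd_comp {V : ℝ → ℝ} {V' : ℝ} {x : EuclideanSpace ℝ (Fin N)} (hV : HasDerivAt V V' (f x))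
    (hf : DifferentiableAt ℝ f x) (i : Fin N) :
    pd i (fun y => V (f y)) x = V' * pd i f x := by
  have h : HasFDerivAt (fun y => V (f y)) (V' • fderiv ℝ f x) x :=
    hV.comp_hasFDerivAt x hf.hasFDerivAt
  simp [pd, h.fderiv]

theorem eulerDeriv_eq_sum_pd (f : EuclideanSpace ℝ (Fin N) → ℝ) (x : EuclideanSpace ℝ (Fin N)) :
    eulerDeriv f x = ∑ i, x i * pd i f x := by
  have hx : x = ∑ i, x i • EuclideanSpace.single i (1 : ℝ) := by
    simpa using ((EuclideanSpace.basisFun (Fin N) ℝ).sum_repr x).symm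
  exact (congrArg (fderiv ℝ f x) hx).trans (by simp [pd])

theorem pd_eulerDeriv (hf : ContDiff ℝ 2 f) (i : Fin N) (x : EuclideanSpace ℝ (Fin N)) :
    pd i (eulerDeriv f) x = pd i f x + eulerDeriv (pd i f) x := by
  have hd : DifferentiableAt ℝ (fderiv ℝ f) x :=
    (hf.fderiv_right (m := 1) le_rfl).differentiable_one x
  have hsymm : IsSymmSndFDerivAt ℝ f x := hf.contDiffAt.isSymmSndFDerivAt (by simp)
  change fderiv ℝ (fun y => fderiv ℝ f y y) x (EuclideanSpace.single i 1)
    = fderiv ℝ f x (EuclideanSpace.single i 1)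
      + fderiv ℝ (fun y => fderiv ℝ f y (EuclideanSpace.single i 1)) x x
  rw [fderiv_clm_apply hd differentiableAt_fun_id,
    fderiv_clm_apply hd (differentiableAt_const _)]
  simp [hsymm.eq x]

theorem eulerDeriv_gradsq (hf : ∀ i, Differentiable ℝ (pd i f))
    (x : EuclideanSpace ℝ (Fin N)) :
    eulerDeriv (gradsq f) x = 2 * ∑ i, pd i f x * eulerDeriv (pd i f) x := by
  have hsum : eulerDeriv (gradsq f) x = ∑ i, eulerDeriv (fun y => pd i f y ^ 2) x := by
    unfold eulerDeriv gradsq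
    rw [fderiv_fun_sum fun i _ => (hf i x).fun_pow 2, sum_apply]
  rw [hsum, Finset.mul_sum]
  exact Finset.sum_congr rfl fun i _ => by rw [eulerDeriv_sq (hf i x), mul_assoc]

namespace HasExpDecay

variable {n : ℕ}

protected theorem pd (hf : HasExpDecay (n + 1) f) (i : Fin N) : HasExpDecay n (pd i f) :=
  hf.fderiv_apply _

protected theorem lap (hf : HasExpDecay (n + 2) f) : HasExpDecay n (lap f) :=
  HasExpDecay.sum _ fun i => (hf.pd i).pd i

protected theorem gradsq (hf : HasExpDecay (n + 1) f) : HasExpDecay n (gradsq f) :=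
  HasExpDecay.sum _ fun i => (hf.pd i).sq

theorem coord_mul (hf : HasExpDecay n f) (i : Fin N) : HasExpDecay n fun x => x i * f x :=
  temperate_mul (hasTemperateGrowth_coord i) hf

protected theorem eulerDeriv (hf : HasExpDecay (n + 1) f) : HasExpDecay n (eulerDeriv f) := by
  rw [funext (eulerDeriv_eq_sum_pd f)]
  exact HasExpDecay.sum _ fun i => (hf.pd i).coord_mul i

end HasExpDecay

section IntegralIdentities

variable {g v φ ψ : EuclideanSpace ℝ (Fin N) → ℝ}

theorem integral_mul_lap_of_integrable (hφ : Differentiable ℝ φ)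
    (hψ : ∀ i, Differentiable ℝ (pd i ψ)) (hφψ : ∀ i, Integrable fun x => φ x * pd i ψ x)
    (hφ'ψ : ∀ i, Integrable fun x => pd i φ x * pd i ψ x)
    (hφψ' : ∀ i, Integrable fun x => φ x * pd i (pd i ψ) x) :
    ∫ x, φ x * lap ψ x = -∫ x, ∑ i, pd i φ x * pd i ψ x := by
  simp only [lap, Finset.mul_sum]
  rw [integral_finsetSum _ fun i _ => hφψ' i, integral_finsetSum _ fun i _ => hφ'ψ i,
    ← Finset.sum_neg_distrib]
  exact Finset.sum_congr rfl fun i _ => integral_mul_fderiv_eq_neg_fderiv_mul_of_integrable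
    (hφ'ψ i) (hφψ' i) (hφψ i) (fun x _ => hφ x) (fun x _ => hψ i x)

theorem integral_eulerDeriv_of_integrable (hg : Differentiable ℝ g) (hgi : Integrable g)
    (hxg : ∀ i, Integrable fun x => x i * g x)
    (hxg' : ∀ i, Integrable fun x => x i * pd i g x) :
    ∫ x, eulerDeriv g x = -(N * ∫ x, g x) := by
  have by_parts (i : Fin N) : ∫ x, x i * pd i g x = -∫ x, g x := by
    have h1 (x : EuclideanSpace ℝ (Fin N)) :
        fderiv ℝ (fun y => y i) x (EuclideanSpace.single i 1) = 1 := pd_coord i x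
    have := integral_mul_fderiv_eq_neg_fderiv_mul_of_integrable (μ := volume)
      (f := fun x : EuclideanSpace ℝ (Fin N) => x i) (g := g) (v := EuclideanSpace.single i 1)
      (by simpa only [h1, one_mul] using hgi) (hxg' i) (hxg i)
      (fun x _ => by fun_prop) (fun x _ => hg x)
    simpa only [pd, h1, one_mul] using this
  simp only [eulerDeriv_eq_sum_pd]
  rw [integral_finsetSum _ fun i _ => hxg' i]
  simp [by_parts]

theorem HasExpDecay.integral_mul_lap (hφ : HasExpDecay 1 φ) (hψ : HasExpDecay 2 ψ) :
    ∫ x, φ x * lap ψ x = -∫ x, ∑ i, pd i φ x * pd i ψ x :=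
  integral_mul_lap_of_integrable hφ.differentiable (fun i => (hψ.pd i).differentiable)
    (fun i => (hφ.mul (hψ.pd i)).integrable)
    (fun i => ((hφ.pd i).mul ((hψ.pd i).of_le zero_le_one)).integrable)
    (fun i => ((hφ.of_le zero_le_one).mul ((hψ.pd i).pd i)).integrable)

theorem HasExpDecay.integral_mul_lap_self (hv : HasExpDecay 2 v) :
    ∫ x, v x * lap v x = -∫ x, gradsq v x := by
  simpa only [gradsq, sq] using (hv.of_le one_le_two).integral_mul_lap hv

theorem HasExpDecay.integral_eulerDeriv (hg : HasExpDecay 1 g) :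
    ∫ x, eulerDeriv g x = -(N * ∫ x, g x) :=
  integral_eulerDeriv_of_integrable hg.differentiable hg.integrable
    (fun i => (hg.coord_mul i).integrable) (fun i => ((hg.pd i).coord_mul i).integrable)

theorem HasExpDecay.integral_eulerDeriv_mul_lap (hv : HasExpDecay 2 v) :
    ∫ x, eulerDeriv v x * lap v x = (N - 2) / 2 * ∫ x, gradsq v x := by
  have hgrad : HasExpDecay 1 (gradsq v) := hv.gradsq
  have pointwise x : ∑ i, pd i (eulerDeriv v) x * pd i v x
      = gradsq v x + 1 / 2 * eulerDeriv (gradsq v) x := by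
    rw [eulerDeriv_gradsq (fun i => (hv.pd i).differentiable), gradsq, Finset.mul_sum,
      Finset.mul_sum, ← Finset.sum_add_distrib]
    refine Finset.sum_congr rfl fun i _ => ?_
    rw [pd_eulerDeriv hv.contDiff]
    ring
  calc ∫ x, eulerDeriv v x * lap v x
      = -∫ x, (gradsq v x + 1 / 2 * eulerDeriv (gradsq v) x) := by
        simp only [hv.eulerDeriv.integral_mul_lap hv, pointwise]
    _ = -((∫ x, gradsq v x) + 1 / 2 * -(N * ∫ x, gradsq v x)) := by
        rw [integral_add hgrad.integrable (hgrad.eulerDeriv.integrable.const_mul _),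
          integral_const_mul, hgrad.integral_eulerDeriv]
    _ = (N - 2) / 2 * ∫ x, gradsq v x := by ring

end IntegralIdentities

section QuasilinearEquation

variable {u : EuclideanSpace ℝ (Fin N) → ℝ} {f V : ℝ → ℝ}

theorem nehari_identity (hu : HasExpDecay 2 u)
    (hsol : ∀ x, -lap u x - u x * lap (fun y => u y ^ 2) x + f (u x) = 0) :
    (∫ x, gradsq u x) + (∫ x, gradsq (fun y => u y ^ 2) x) + ∫ x, u x * f (u x) = 0 := by
  have hu0 : HasExpDecay 0 u := hu.of_le zero_le_two
  have pointwise x :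
      u x * f (u x) = u x * lap u x + u x ^ 2 * lap (fun y => u y ^ 2) x := by
    linear_combination u x * hsol x
  simp only [pointwise]
  rw [integral_add (hu0.mul hu.lap).integrable (hu0.sq.mul hu.sq.lap).integrable,
    hu.integral_mul_lap_self, hu.sq.integral_mul_lap_self]
  ring

theorem pohozaev_identity (hu : HasExpDecay 2 u)
    (hsol : ∀ x, -lap u x - u x * lap (fun y => u y ^ 2) x + f (u x) = 0)
    (hV : ∀ x, HasDerivAt V (f (u x)) (u x)) (hVu : HasExpDecay 0 fun x => V (u x)) :
    (N - 2) / 2 * ((∫ x, gradsq u x) + 1 / 2 * ∫ x, gradsq (fun y => u y ^ 2) x)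
      + N * ∫ x, V (u x) = 0 := by
  have hdu : Differentiable ℝ u := hu.differentiable
  have hfu : HasExpDecay 0 fun x => f (u x) := by
    have hf x : f (u x) = lap u x + u x * lap (fun y => u y ^ 2) x := by
      linear_combination hsol x
    simpa only [hf] using hu.lap.add ((hu.of_le zero_le_two).mul hu.sq.lap)
  have dilation : ∫ x, eulerDeriv (fun y => V (u y)) x = -(N * ∫ x, V (u x)) := by
    refine integral_eulerDeriv_of_integrable
      (fun x => (hV x).differentiableAt.comp x (hdu x)) hVu.integrable
      (fun i => (hVu.coord_mul i).integrable) fun i => ?_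
    simp only [pd_comp (hV _) (hdu _)]
    exact ((hfu.mul ((hu.pd i).of_le zero_le_one)).coord_mul i).integrable
  have tested x : eulerDeriv (fun y => V (u y)) x = eulerDeriv u x * lap u x
      + 1 / 2 * (eulerDeriv (fun y => u y ^ 2) x * lap (fun y => u y ^ 2) x) := by
    rw [eulerDeriv_comp (hV x) (hdu x), eulerDeriv_sq (hdu x)]
    linear_combination eulerDeriv u x * hsol x
  have integrable_eulerDeriv_mul_lap {v : EuclideanSpace ℝ (Fin N) → ℝ} (hv : HasExpDecay 2 v) :
      Integrable fun x => eulerDeriv v x * lap v x :=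
    ((hv.eulerDeriv.of_le zero_le_one).mul hv.lap).integrable
  simp only [tested] at dilation
  rw [integral_add (integrable_eulerDeriv_mul_lap hu)
      ((integrable_eulerDeriv_mul_lap hu.sq).const_mul _), integral_const_mul,
    hu.integral_eulerDeriv_mul_lap, hu.sq.integral_eulerDeriv_mul_lap] at dilation
  linear_combination dilation

end QuasilinearEquation

section PowerNonlinearity

variable {ω p : ℝ} {u : EuclideanSpace ℝ (Fin N) → ℝ}

theorem integral_Lplus_self_mul_self (hu : HasExpDecay 2 u) (hpos : ∀ x, 0 < u x)
    (hp : -1 < p) : ∫ x, Lplus ω p u u x * u x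
      = (∫ x, gradsq u x) + 3 * (∫ x, gradsq (fun y => u y ^ 2) x)
        + ω * (∫ x, u x ^ 2) - p * ∫ x, u x ^ (p + 1) := by
  have hu0 : HasExpDecay 0 u := hu.of_le zero_le_two
  have hrpow x : u x ^ (p + 1) = u x ^ (p - 1) * u x ^ 2 := by
    rw [← rpow_two, ← rpow_add (hpos x)]
    ring_nf
  have pointwise x : Lplus ω p u u x * u x
      = -1 * (u x * lap u x) + -3 * (u x ^ 2 * lap (fun y => u y ^ 2) x) + ω * u x ^ 2
        + -p * u x ^ (p + 1) := by
    simp only [Lplus, ← sq, hrpow]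
    ring
  have hlap := (hu0.mul hu.lap).const_mul (-1)
  have hlap_sq := (hu0.sq.mul hu.sq.lap).const_mul (-3)
  have hmass := hu0.sq.const_mul ω
  have hpower := (hu0.rpow hpos (by linarith : 0 < p + 1)).const_mul (-p)
  simp only [pointwise]
  rw [integral_add ((hlap.add hlap_sq).add hmass).integrable hpower.integrable,
    integral_add (hlap.add hlap_sq).integrable hmass.integrable,
    integral_add hlap.integrable hlap_sq.integrable]
  simp only [integral_const_mul, hu.integral_mul_lap_self, hu.sq.integral_mul_lap_self]
  ring

theorem nehari_identity_rpow (hu : HasExpDecay 2 u) (hpos : ∀ x, 0 < u x) (hp : -1 < p)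
    (hsol : ∀ x, -lap u x - u x * lap (fun y => u y ^ 2) x + ω * u x - u x ^ p = 0) :
    (∫ x, gradsq u x) + (∫ x, gradsq (fun y => u y ^ 2) x) + ω * (∫ x, u x ^ 2)
      - ∫ x, u x ^ (p + 1) = 0 := by
  have hu0 : HasExpDecay 0 u := hu.of_le zero_le_two
  have hup : HasExpDecay 0 fun x => u x ^ (p + 1) := hu0.rpow hpos (by linarith)
  have hf x : u x * (ω * u x - u x ^ p) = ω * u x ^ 2 - u x ^ (p + 1) := by
    rw [rpow_add_one (hpos x).ne']
    ring
  have nehari := nehari_identity (f := fun s => ω * s - s ^ p) hu fun x => by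
    linear_combination hsol x
  simp only [hf] at nehari
  rw [integral_sub (hu0.sq.integrable.const_mul ω) hup.integrable, integral_const_mul] at nehari
  linear_combination nehari

theorem pohozaev_identity_rpow (hu : HasExpDecay 2 u) (hpos : ∀ x, 0 < u x) (hp : -1 < p)
    (hsol : ∀ x, -lap u x - u x * lap (fun y => u y ^ 2) x + ω * u x - u x ^ p = 0) :
    (N - 2) / 2 * ((∫ x, gradsq u x) + 1 / 2 * ∫ x, gradsq (fun y => u y ^ 2) x)
      + N * (ω / 2 * (∫ x, u x ^ 2) + -(p + 1)⁻¹ * ∫ x, u x ^ (p + 1)) = 0 := by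
  have hp1 : p + 1 ≠ 0 := by linarith
  have hmass := (hu.of_le zero_le_two).sq.const_mul (ω / 2)
  have hpower := ((hu.of_le zero_le_two).rpow hpos (by linarith : 0 < p + 1)).const_mul
    (-(p + 1)⁻¹)
  have hV x : HasDerivAt (fun s => ω / 2 * s ^ 2 + -(p + 1)⁻¹ * s ^ (p + 1))
      (ω * u x - u x ^ p) (u x) := by
    refine (((hasDerivAt_pow 2 (u x)).const_mul (ω / 2)).fun_add
      ((hasDerivAt_rpow_const (Or.inl (hpos x).ne')).const_mul _)).congr_deriv ?_
    rw [add_sub_cancel_right]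
    field_simp
    ring
  have pohozaev := pohozaev_identity (f := fun s => ω * s - s ^ p) hu
    (fun x => by linear_combination hsol x) hV (hmass.add hpower)
  rwa [integral_add hmass.integrable hpower.integrable, integral_const_mul, integral_const_mul]
    at pohozaev

theorem integral_rpow_pos (hu : HasExpDecay 0 u) (hpos : ∀ x, 0 < u x) {q : ℝ} (hq : 0 < q) :
    0 < ∫ x, u x ^ q :=
  integral_pos_of_integrable_nonneg_nonzero (x := 0) (hu.rpow hpos hq).contDiff.continuous
    (hu.rpow hpos hq).integrable (fun x => (rpow_pos_of_pos (hpos x) q).le)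
    (rpow_pos_of_pos (hpos 0) q).ne'

theorem stmt16_general (hu : HasExpDecay 2 u) (hpos : ∀ x, 0 < u x) (hp : 1 < p)
    (hsol : ∀ x, -lap u x - u x * lap (fun y => u y ^ 2) x + ω * u x - u x ^ p = 0) :
    (∫ x, Lplus ω p u u x * u x) = -(8 / (N + 2)) * (∫ x, gradsq u x)
        - (p - 1) * ((N + 2) * p - (3 * N - 2)) / ((N + 2) * (p + 1)) * ∫ x, u x ^ (p + 1)
      ∧ (3 * N - 2 < (N + 2) * p → (∫ x, Lplus ω p u u x * u x) < 0) := by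
  have hp1 : 0 < p + 1 := by linarith
  have formula : (∫ x, Lplus ω p u u x * u x) = -(8 / (N + 2)) * (∫ x, gradsq u x)
      - (p - 1) * ((N + 2) * p - (3 * N - 2)) / ((N + 2) * (p + 1)) * ∫ x, u x ^ (p + 1) := by
    have nehari := nehari_identity_rpow hu hpos (by linarith) hsol
    have pohozaev := pohozaev_identity_rpow hu hpos (by linarith) hsol
    rw [integral_Lplus_self_mul_self hu hpos (by linarith)]
    linear_combination (norm := (field_simp; ring))
      (1 + 4 * N / (N + 2)) * nehari - 8 / (N + 2) * pohozaev
  refine ⟨formula, fun hpN => ?_⟩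
  have hgrad : 0 ≤ 8 / (N + 2) * ∫ x, gradsq u x :=
    mul_nonneg (by positivity) (integral_nonneg fun x => Finset.sum_nonneg fun i _ => sq_nonneg _)
  have hcoeff : 0 < (p - 1) * ((N + 2) * p - (3 * N - 2)) / ((N + 2) * (p + 1)) :=
    div_pos (mul_pos (sub_pos.2 hp) (sub_pos.2 hpN)) (by positivity)
  have hpower : 0 < ∫ x, u x ^ (p + 1) := integral_rpow_pos (hu.of_le zero_le_two) hpos hp1
  linarith [mul_pos hcoeff hpower]

end PowerNonlinearity

end PartialDerivatives

/-- In dimension 2, `∫ (L₊u)·u = −2 ∫ |∇u|² − ((p−1)²/(p+1)) ∫ u^{p+1} < 0`. -/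
theorem stmt16 (ω p : ℝ) (hω : 0 < ω) (hp : 1 < p)
    (u : EuclideanSpace ℝ (Fin 2) → ℝ) (hsm : ContDiff ℝ (⊤ : ℕ∞) u) (hpos : ∀ x, 0 < u x)
    (hnz : ∃ x, u x ≠ 0)
    (hsol : ∀ x, -lap u x - u x * lap (fun y => (u y) ^ 2) x + ω * u x - (u x) ^ p = 0)
    (hdec : ∃ C > 0, ∃ δ > 0, ∀ k : ℕ, k ≤ 2 → ∀ x,
      ‖iteratedFDeriv ℝ k u x‖ ≤ C * Real.exp (-δ * ‖x‖)) :
    (∫ x, Lplus ω p u u x * u x)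
        = -2 * (∫ x, gradsq u x) - ((p - 1) ^ 2 / (p + 1)) * ∫ x, u x ^ (p + 1)
      ∧ (∫ x, Lplus ω p u u x * u x) < 0 := by
  obtain ⟨C, -, δ, hδ, hbound⟩ := hdec
  have hu : HasExpDecay 2 u := hasExpDecay_of_norm_le (contDiff_infty.1 hsm 2) hδ hbound
  obtain ⟨formula, neg⟩ := stmt16_general hu hpos hp hsol
  refine ⟨formula.trans ?_, neg (by push_cast; linarith)⟩
  push_cast
  field_simp
  ring

end
end
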